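/- Let d ≥ 1 and let ℰ⁺_d be the class of real-valued, continuous, integrable functions F : ℝ^d → ℝ with F ≥ 0 on ℝ^d and F̂(y) ≤ 0 for all |y| ≥ 1, and let C = sup over nonzero F ∈ ℰ⁺_d of F(0)/F̂(0). Then there exists a radial nonzero function G ∈ ℰ⁺_d attaining this supremum, i.e., G(0)/Ĝ(0) = C. -/

import Mathlib

open MeasureTheory Filter
open scoped FourierTransform Real

/-- The class 𝒜 sharp constant 𝒞(A). -/
noncomputable def Ccal (A : ℝ) : ℝ :=
  sSup { r : ℝ | ∃ F : ℝ → ℂ, Continuous F ∧ Integrable F ∧ F ≠ 0 ∧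
    r = (‖F 0‖ - A * ∫ t in {t : ℝ | 1 ≤ |t|}, ‖𝓕 F t‖) / ∫ x : ℝ, ‖F x‖ }

/-- 𝒞(∞), over the bandlimited class ℰ. -/
noncomputable def CcalInf : ℝ :=
  sSup { r : ℝ | ∃ F : ℝ → ℂ, Continuous F ∧ Integrable F ∧ F ≠ 0 ∧
    Function.support (𝓕 F) ⊆ Set.Icc (-1 : ℝ) 1 ∧
    r = ‖F 0‖ / ∫ x : ℝ, ‖F x‖ }

/-- Fourier transform of a real-valued function, as a real number (its real part). -/
noncomputable def FTr (F : ℝ → ℝ) (t : ℝ) : ℝ := (𝓕 (fun x => (F x : ℂ)) t).re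

/-- The class 𝒜⁺ sharp constant 𝒞⁺(A). -/
noncomputable def CcalPlus (A : ℝ) : ℝ :=
  sSup { r : ℝ | ∃ F : ℝ → ℝ, Continuous F ∧ Integrable F ∧ F ≠ 0 ∧ (∀ x, F (-x) = F x) ∧
    r = (F 0 - A * ∫ t in {t : ℝ | 1 ≤ |t|}, max (FTr F t) 0) / ∫ x : ℝ, |F x| }

/-- 𝒞⁺(∞), over the class ℰ⁺. -/
noncomputable def CcalPlusInf : ℝ :=
  sSup { r : ℝ | ∃ F : ℝ → ℝ, Continuous F ∧ Integrable F ∧ F ≠ 0 ∧ (∀ x, F (-x) = F x) ∧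
    (∀ t : ℝ, 1 ≤ |t| → FTr F t ≤ 0) ∧
    r = F 0 / ∫ x : ℝ, |F x| }

/-- The prime counting function at a real argument. -/
noncomputable def primePi (x : ℝ) : ℕ := Nat.primeCounting ⌊x⌋₊

/-- The Brun–Titchmarsh constant 𝐁. -/
noncomputable def BrunTitchmarsh : ℝ :=
  limsup (fun x : ℝ =>
    ((primePi (x + Real.sqrt x) : ℝ) - (primePi x : ℝ)) / (Real.sqrt x / Real.log x)) atTop

open scoped Topology ContDiff

/-- Near-minimal-norm selection: a decreasing sequence of nonempty bounded midpoint-convex sets in a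
Hilbert space admits a convergent sequence of representatives whose limit is fixed by every
norm-preserving continuous map that preserves all the sets. -/
theorem exists_tendsto_of_antitone_midpoint {E : Type*} [NormedAddCommGroup E]
    [InnerProductSpace ℂ E] [CompleteSpace E] (S : ℕ → Set E) (hS : Antitone S)
    (hne : ∀ n, (S n).Nonempty)
    (hmid : ∀ n, ∀ a ∈ S n, ∀ b ∈ S n, (1 / 2 : ℂ) • (a + b) ∈ S n)
    (M : ℝ) (hM : ∀ e ∈ S 0, ‖e‖ ^ 2 ≤ M) :
    ∃ (x : E) (u : ℕ → E), (∀ n, u n ∈ S n) ∧ Tendsto u atTop (𝓝 x) ∧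
      ∀ T : E → E, Continuous T → (∀ e, ‖T e‖ = ‖e‖) → (∀ n, ∀ e ∈ S n, T e ∈ S n) → T x = x := by
  set m : ℕ → ℝ := fun n => sInf ((fun e => ‖e‖ ^ 2) '' S n) with hm
  have hbdd : ∀ n, BddBelow ((fun e : E => ‖e‖ ^ 2) '' S n) := fun n =>
    ⟨0, by rintro _ ⟨e, -, rfl⟩; positivity⟩
  have hle : ∀ n, ∀ e ∈ S n, m n ≤ ‖e‖ ^ 2 := fun n e he => csInf_le (hbdd n) ⟨e, he, rfl⟩
  have hmono : Monotone m := fun n k hnk =>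
    csInf_le_csInf (hbdd n) ((hne k).image _) (Set.image_mono (hS hnk))
  have hmM : ∀ n, m n ≤ M := fun n => by
    obtain ⟨e, he⟩ := hne n
    exact (hle n e he).trans (hM e (hS (Nat.zero_le n) he))
  have hbm : BddAbove (Set.range m) := ⟨M, by rintro _ ⟨n, rfl⟩; exact hmM n⟩
  have hlim : Tendsto m atTop (𝓝 (⨆ n, m n)) := tendsto_atTop_ciSup hmono hbm
  have hex : ∀ n : ℕ, ∃ e ∈ S n, ‖e‖ ^ 2 ≤ m n + 1 / ((n : ℝ) + 1) := fun n => by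
    obtain ⟨_, ⟨e, he, rfl⟩, hlt⟩ := exists_lt_of_csInf_lt ((hne n).image fun e : E => ‖e‖ ^ 2)
      (lt_add_of_pos_right (m n) (by positivity : 0 < 1 / ((n : ℝ) + 1)))
    exact ⟨e, he, hlt.le⟩
  choose u huS hu using hex
  have key : ∀ n, ∀ a ∈ S n, ∀ b ∈ S n, ∀ δ : ℝ, ‖a‖ ^ 2 ≤ m n + δ → ‖b‖ ^ 2 ≤ m n + δ →
      ‖a - b‖ ^ 2 ≤ 4 * δ := by
    intro n a ha b hb δ h1 h2
    have h3 := hle n _ (hmid n a ha b hb)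
    have h4 := parallelogram_law_with_norm ℂ a b
    rw [norm_smul, mul_pow] at h3
    norm_num at h3
    linarith
  set δ : ℕ → ℝ := fun n => (⨆ n, m n) - m n + 1 / ((n : ℝ) + 1) with hδ
  have hδlim : Tendsto δ atTop (𝓝 0) := by
    have := (hlim.const_sub (⨆ n, m n)).add (tendsto_one_div_add_atTop_nhds_zero_nat (𝕜 := ℝ))
    simpa [hδ] using this
  have hsq : Tendsto (fun n => √(4 * δ n)) atTop (𝓝 0) := by
    have := (hδlim.const_mul 4).sqrt
    simpa using this
  have hnear : ∀ n k, n ≤ k → ‖u k‖ ^ 2 ≤ m n + δ n := by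
    intro n k hnk
    have h1 := hu k
    have h2 : m k ≤ ⨆ n, m n := le_ciSup hbm k
    have h3 : 1 / ((k : ℝ) + 1) ≤ 1 / ((n : ℝ) + 1) := by gcongr
    simp only [hδ]
    linarith
  have hcauchy : CauchySeq u := by
    refine cauchySeq_of_le_tendsto_0' _ (fun n k hnk => ?_) hsq
    rw [dist_eq_norm]
    exact Real.le_sqrt_of_sq_le (key n _ (huS n) _ (hS hnk (huS k)) _ (hnear n n le_rfl)
      (hnear n k hnk))
  obtain ⟨x, hx⟩ := cauchySeq_tendsto_of_complete hcauchy
  refine ⟨x, u, huS, hx, fun T hT hnorm hTS => ?_⟩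
  have h1 : Tendsto (fun n => T (u n) - u n) atTop (𝓝 (T x - x)) :=
    ((hT.tendsto x).comp hx).sub hx
  have h2 : Tendsto (fun n => T (u n) - u n) atTop (𝓝 0) := by
    refine squeeze_zero_norm (fun n => ?_) hsq
    exact Real.le_sqrt_of_sq_le (key n _ (hTS n _ (huS n)) _ (huS n) _
      (by rw [hnorm]; exact hnear n n le_rfl) (hnear n n le_rfl))
  exact sub_eq_zero.1 (tendsto_nhds_unique h1 h2)

/-- A Bochner form of Fatou's lemma for nonnegative functions. -/
theorem integrable_and_integral_le_of_tendsto_ae {α : Type*} [MeasurableSpace α] {μ : Measure α}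
    {f : ℕ → α → ℝ} {g : α → ℝ} {a : ℕ → ℝ} {b : ℝ} (hf : ∀ n, Integrable (f n) μ)
    (h0 : ∀ n, 0 ≤ᵐ[μ] f n) (hlim : ∀ᵐ x ∂μ, Tendsto (fun n => f n x) atTop (𝓝 (g x)))
    (ha : ∀ n, ∫ x, f n x ∂μ ≤ a n) (hab : Tendsto a atTop (𝓝 b)) :
    0 ≤ᵐ[μ] g ∧ Integrable g μ ∧ ∫ x, g x ∂μ ≤ b := by
  have hg0 : 0 ≤ᵐ[μ] g := by
    filter_upwards [ae_all_iff.2 h0, hlim] with x hx hl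
    exact ge_of_tendsto' hl hx
  have hgm : AEStronglyMeasurable g μ := aestronglyMeasurable_of_tendsto_ae atTop
    (fun n => (hf n).1) hlim
  have hb : 0 ≤ b := ge_of_tendsto' hab fun n => (integral_nonneg_of_ae (h0 n)).trans (ha n)
  have hfatou : ∫⁻ x, ENNReal.ofReal (g x) ∂μ ≤ ENNReal.ofReal b := by
    calc ∫⁻ x, ENNReal.ofReal (g x) ∂μ
        = ∫⁻ x, liminf (fun n => ENNReal.ofReal (f n x)) atTop ∂μ := by
          refine lintegral_congr_ae ?_
          filter_upwards [hlim] with x hx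
          exact ((ENNReal.continuous_ofReal.tendsto _).comp hx).liminf_eq.symm
      _ ≤ liminf (fun n => ∫⁻ x, ENNReal.ofReal (f n x) ∂μ) atTop :=
          lintegral_liminf_le' fun n => (hf n).1.aemeasurable.ennreal_ofReal
      _ ≤ liminf (fun n => ENNReal.ofReal (a n)) atTop := by
          refine liminf_le_liminf (Eventually.of_forall fun n => ?_)
          rw [← ofReal_integral_eq_lintegral_ofReal (hf n) (h0 n)]
          exact ENNReal.ofReal_le_ofReal (ha n)
      _ = ENNReal.ofReal b := ((ENNReal.continuous_ofReal.tendsto _).comp hab).liminf_eq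
  have hint : Integrable g μ :=
    (lintegral_ofReal_ne_top_iff_integrable hgm hg0).1 (hfatou.trans_lt ENNReal.ofReal_lt_top).ne
  refine ⟨hg0, hint, ?_⟩
  rw [← ofReal_integral_eq_lintegral_ofReal hint hg0] at hfatou
  exact (ENNReal.ofReal_le_ofReal_iff hb).1 hfatou

theorem subset_of_ae_imp_mem {α : Type*} [TopologicalSpace α] [MeasurableSpace α] {μ : Measure α}
    [μ.IsOpenPosMeasure] {U K : Set α} (hU : IsOpen U) (hK : IsClosed K)
    (h : ∀ᵐ x ∂μ, x ∈ U → x ∈ K) : closure U ⊆ K := by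
  refine closure_minimal ?_ hK
  have : U \ K = ∅ := by
    refine (hU.sdiff hK).eq_empty_of_measure_zero (μ := μ) ?_
    rw [ae_iff] at h
    convert h using 2
    ext x; simp
  exact Set.sdiff_eq_empty.1 this

section Fourier

variable {V : Type*} [NormedAddCommGroup V] [InnerProductSpace ℝ V] [MeasurableSpace V]
  [BorelSpace V] [FiniteDimensional ℝ V]

theorem integral_fourier_mul_eq_integral_mul_fourier {f g : V → ℂ} (hf : Integrable f)
    (hg : Integrable g) : ∫ y, 𝓕 f y * g y = ∫ x, f x * 𝓕 g x := by
  simpa using! VectorFourier.integral_fourierIntegral_smul_eq_flip (L := innerₗ V)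
    Real.continuous_fourierChar continuous_inner hf hg

theorem continuous_fourier {f : V → ℂ} (hf : Integrable f) : Continuous (𝓕 f) :=
  VectorFourier.fourierIntegral_continuous Real.continuous_fourierChar
    (L := innerₗ V) continuous_inner hf

theorem norm_fourier_le (f : V → ℂ) (y : V) : ‖𝓕 f y‖ ≤ ∫ x, ‖f x‖ :=
  VectorFourier.norm_fourierIntegral_le_integral_norm _ _ _ _ _

/-- Gaussian summation of the Fourier transform recovers the function at the origin. -/
theorem tendsto_integral_gaussian_mul_fourier {f : V → ℂ} (hf : Integrable f)
    (hc : ContinuousAt f 0) :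
    Tendsto (fun c : ℝ => ∫ w : V, Complex.exp (-c⁻¹ * ‖w‖ ^ 2) * 𝓕 f w) atTop (𝓝 (f 0)) := by
  refine (Real.tendsto_integral_gaussian_smul' hf hc).congr' ?_
  filter_upwards [Ioi_mem_atTop 0] with c (hc : 0 < c)
  have J : Integrable (fun w : V ↦
      Complex.exp (- c⁻¹ * ‖w‖ ^ 2 + 2 * π * Complex.I * inner ℝ (0 : V) w)) :=
    GaussianFourier.integrable_cexp_neg_mul_sq_norm_add (by simpa) _ _
  have h := integral_fourier_mul_eq_integral_mul_fourier J hf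
  simp only [inner_zero_left, Complex.ofReal_zero, mul_zero, add_zero] at h
  rw [← h]
  congr with w
  have h2 := fourier_gaussian_innerProductSpace' (b := ((c⁻¹ : ℝ) : ℂ)) (by simpa) (0 : V) w
  simp only [inner_zero_left, Complex.ofReal_zero, mul_zero, add_zero] at h2
  rw [h2, smul_eq_mul]
  congr 2
  · simp
  · simp; ring_nf

/-- The Fourier transform is compatible with bounded almost everywhere convergence. -/
theorem fourier_ae_eq_of_tendsto {u v : ℕ → V → ℂ} {f g : V → ℂ} {M : ℝ}
    (hu : ∀ n, Integrable (u n)) (huv : ∀ n, 𝓕 (u n) = v n)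
    (hf : Integrable f) (hg : Integrable g)
    (huM : ∀ n x, ‖u n x‖ ≤ M) (hvM : ∀ n x, ‖v n x‖ ≤ M)
    (huf : ∀ᵐ x, Tendsto (fun n => u n x) atTop (𝓝 (f x)))
    (hvg : ∀ᵐ x, Tendsto (fun n => v n x) atTop (𝓝 (g x))) :
    𝓕 f =ᵐ[volume] g := by
  refine ae_eq_of_integral_contDiff_smul_eq (continuous_fourier hf).locallyIntegrable
    hg.locallyIntegrable fun φ hφ hφs => ?_
  set ψ : SchwartzMap V ℂ := (hφs.comp_left Complex.ofReal_zero).toSchwartzMap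
    (Complex.ofRealCLM.contDiff.comp hφ) with hψ
  have hψφ : ∀ x, ψ x = (φ x : ℂ) := fun x => rfl
  have hψi : Integrable (ψ : V → ℂ) := ψ.integrable
  have hψi' : Integrable (𝓕 (ψ : V → ℂ)) := (𝓕 ψ).integrable
  simp_rw [Complex.real_smul, ← hψφ]
  have hv : ∀ n, Continuous (v n) := fun n => huv n ▸ continuous_fourier (hu n)
  have h1 : Tendsto (fun n => ∫ x, u n x * 𝓕 (ψ : V → ℂ) x) atTop
      (𝓝 (∫ x, f x * 𝓕 (ψ : V → ℂ) x)) := by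
    refine tendsto_integral_of_dominated_convergence (fun x => M * ‖𝓕 (ψ : V → ℂ) x‖)
      (fun n => (hu n).1.mul hψi'.1) (hψi'.norm.const_mul M) (fun n => ?_) ?_
    · filter_upwards with x
      rw [norm_mul]
      exact mul_le_mul_of_nonneg_right (huM n x) (norm_nonneg _)
    · filter_upwards [huf] with x hx using hx.mul_const _
  have h2 : Tendsto (fun n => ∫ x, v n x * ψ x) atTop (𝓝 (∫ x, g x * ψ x)) := by
    refine tendsto_integral_of_dominated_convergence (fun x => M * ‖ψ x‖)
      (fun n => (hv n).aestronglyMeasurable.mul hψi.1) (hψi.norm.const_mul M) (fun n => ?_) ?_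
    · filter_upwards with x
      rw [norm_mul]
      exact mul_le_mul_of_nonneg_right (hvM n x) (norm_nonneg _)
    · filter_upwards [hvg] with x hx using hx.mul_const _
  have h3 : ∀ n, ∫ x, u n x * 𝓕 (ψ : V → ℂ) x = ∫ x, v n x * ψ x := fun n => by
    rw [← huv n, integral_fourier_mul_eq_integral_mul_fourier (hu n) hψi]
  simp_rw [h3] at h1
  have h4 := tendsto_nhds_unique h1 h2
  rw [← integral_fourier_mul_eq_integral_mul_fourier hf hψi] at h4
  simpa only [mul_comm] using h4

/-- The real part of the Fourier transform of a real function. -/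
noncomputable def reFourier (F : V → ℝ) (y : V) : ℝ := (𝓕 (fun x => (F x : ℂ)) y).re

theorem continuous_reFourier {F : V → ℝ} (hF : Integrable F) : Continuous (reFourier F) :=
  Complex.continuous_re.comp (continuous_fourier hF.ofReal)

theorem abs_reFourier_le (F : V → ℝ) (y : V) : |reFourier F y| ≤ ∫ x, |F x| := by
  refine (Complex.abs_re_le_norm _).trans ((norm_fourier_le _ _).trans_eq ?_)
  simp

theorem reFourier_zero {F : V → ℝ} : reFourier F 0 = ∫ x, F x := by
  simp [reFourier, Real.fourier_eq, integral_complex_ofReal]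

theorem reFourier_comp (R : V ≃ₗᵢ[ℝ] V) (F : V → ℝ) (y : V) :
    reFourier (F ∘ R) y = reFourier F (R y) := by
  unfold reFourier
  rw [← Real.fourier_comp_linearIsometry]
  rfl

theorem reFourier_add {F G : V → ℝ} (hF : Integrable F) (hG : Integrable G) (y : V) :
    reFourier (fun x => F x + G x) y = reFourier F y + reFourier G y := by
  have := VectorFourier.fourierIntegral_add (L := innerₗ V) Real.continuous_fourierChar
    continuous_inner hF.ofReal (𝕜 := ℝ) hG.ofReal (E := ℂ) (μ := volume)
  unfold reFourier
  rw [← Complex.add_re]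
  congr 1
  have h := congrFun this y
  simp only [Complex.ofReal_add]
  exact h

theorem reFourier_const_mul (c : ℝ) (F : V → ℝ) (y : V) :
    reFourier (fun x => c * F x) y = c * reFourier F y := by
  have := VectorFourier.fourierIntegral_const_smul Real.fourierChar volume (innerₗ V)
    (fun x => (F x : ℂ)) c
  unfold reFourier
  rw [← Complex.re_ofReal_mul]
  congr 1
  have h := congrFun this y
  simp only [Complex.ofReal_mul]
  exact h

theorem fourier_conj (f : V → ℂ) (y : V) :
    (starRingEnd ℂ) (𝓕 f y) = 𝓕 (fun x => (starRingEnd ℂ) (f x)) (-y) := by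
  rw [Real.fourier_eq', Real.fourier_eq', ← integral_conj]
  congr with x
  simp [← Complex.exp_conj, Complex.conj_ofNat]

/-- The Fourier transform of a real even function is real. -/
theorem fourier_eq_reFourier {F : V → ℝ} (hF : ∀ x, F (-x) = F x) (y : V) :
    𝓕 (fun x => (F x : ℂ)) y = reFourier F y := by
  refine (Complex.conj_eq_iff_re.1 ?_).symm
  rw [fourier_conj]
  have h := congrFun (Real.fourierInv_eq_fourier_comp_neg (fun x => (F x : ℂ))) y
  simp only [Complex.conj_ofReal]
  rw [Real.fourierInv_eq_fourier_neg] at h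
  simpa [hF] using h

/-- The Cohn–Elkies class: nonnegative continuous integrable functions whose Fourier transform has
nonpositive real part outside the open unit ball. -/
structure IsCohnElkies (F : V → ℝ) : Prop where
  continuous : Continuous F
  integrable : Integrable F
  nonneg : ∀ x, 0 ≤ F x
  reFourier_nonpos : ∀ y, 1 ≤ ‖y‖ → reFourier F y ≤ 0

namespace IsCohnElkies

variable {F G : V → ℝ}

theorem add (hF : IsCohnElkies F) (hG : IsCohnElkies G) : IsCohnElkies (fun x => F x + G x) where
  continuous := hF.continuous.add hG.continuous
  integrable := hF.integrable.add hG.integrable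
  nonneg x := add_nonneg (hF.nonneg x) (hG.nonneg x)
  reFourier_nonpos y hy := by
    rw [reFourier_add hF.integrable hG.integrable]
    exact add_nonpos (hF.reFourier_nonpos y hy) (hG.reFourier_nonpos y hy)

theorem const_mul (hF : IsCohnElkies F) {c : ℝ} (hc : 0 ≤ c) :
    IsCohnElkies (fun x => c * F x) where
  continuous := hF.continuous.const_mul c
  integrable := hF.integrable.const_mul c
  nonneg x := mul_nonneg hc (hF.nonneg x)
  reFourier_nonpos y hy := by
    rw [reFourier_const_mul]
    exact mul_nonpos_of_nonneg_of_nonpos hc (hF.reFourier_nonpos y hy)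

theorem comp (hF : IsCohnElkies F) (R : V ≃ₗᵢ[ℝ] V) : IsCohnElkies (F ∘ R) where
  continuous := hF.continuous.comp R.continuous
  integrable := R.measurePreserving.integrable_comp_of_integrable hF.integrable
  nonneg x := hF.nonneg (R x)
  reFourier_nonpos y hy := by
    rw [reFourier_comp]
    exact hF.reFourier_nonpos _ (by simpa using hy)

theorem abs_reFourier_le (hF : IsCohnElkies F) (y : V) : |reFourier F y| ≤ ∫ x, F x := by
  refine (_root_.abs_reFourier_le F y).trans_eq ?_
  congr with x
  exact abs_of_nonneg (hF.nonneg x)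

theorem integral_pos (hF : IsCohnElkies F) (h : F ≠ 0) : 0 < ∫ x, F x := by
  obtain ⟨x, hx⟩ := Function.ne_iff.1 h
  exact integral_pos_of_integrable_nonneg_nonzero hF.continuous hF.integrable hF.nonneg hx

/-- The Fourier transform is integrable outside the unit ball. -/
theorem integrableOn_compl_ball (hF : IsCohnElkies F) :
    IntegrableOn (reFourier F) (Metric.ball 0 1)ᶜ ∧
      ∫ y in (Metric.ball 0 1)ᶜ, -reFourier F y ≤
        volume.real (Metric.ball (0 : V) 1) * (∫ x, F x) - F 0 := by
  set r := reFourier F with hr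
  set B : Set V := Metric.ball 0 1 with hB
  have hrc : Continuous r := continuous_reFourier hF.integrable
  have hgauss : ∀ n : ℕ, Integrable (fun w : V => Real.exp (-((n : ℝ) + 1)⁻¹ * ‖w‖ ^ 2)) := by
    intro n
    have := (GaussianFourier.integrable_cexp_neg_mul_sq_norm_add (V := V)
      (b := ((((n : ℝ) + 1)⁻¹ : ℝ) : ℂ)) (by rw [Complex.ofReal_re]; positivity) 0 0).norm
    refine this.congr (Eventually.of_forall fun w => ?_)
    simp only [Complex.norm_exp]
    congr 1
    simp [← Complex.ofReal_pow, -Complex.ofReal_add]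
  have hint : ∀ n : ℕ, Integrable (fun w : V => Real.exp (-((n : ℝ) + 1)⁻¹ * ‖w‖ ^ 2) * r w) :=
    fun n => (hgauss n).mul_bdd hrc.aestronglyMeasurable
      (Eventually.of_forall fun x => hF.abs_reFourier_le x)
  have hlim : Tendsto (fun n : ℕ => ∫ w : V, Real.exp (-((n : ℝ) + 1)⁻¹ * ‖w‖ ^ 2) * r w) atTop
      (𝓝 (F 0)) := by
    have h1 := tendsto_integral_gaussian_mul_fourier (V := V) (hF.integrable.ofReal (𝕜 := ℂ))
      (Complex.continuous_ofReal.comp hF.continuous).continuousAt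
    have h2 := (Complex.continuous_re.tendsto _).comp
      (h1.comp (tendsto_atTop_add_const_right atTop (1 : ℝ) tendsto_natCast_atTop_atTop))
    refine h2.congr fun n => ?_
    simp only [Function.comp_apply]
    have h3 : Integrable (fun w : V => Complex.exp (-(((n : ℝ) + 1)⁻¹ : ℝ) * ‖w‖ ^ 2) *
        𝓕 (fun x => (F x : ℂ)) w) := by
      refine Integrable.mul_bdd (c := ∫ x, ‖(F x : ℂ)‖) ?_
        (continuous_fourier hF.integrable.ofReal).aestronglyMeasurable
        (Eventually.of_forall fun x => norm_fourier_le _ x)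
      refine (hgauss n).ofReal.congr (Eventually.of_forall fun w => ?_)
      simp
    have h4 := integral_re h3
    simp only [RCLike.re_to_complex] at h4
    refine h4.symm.trans (integral_congr_ae (Eventually.of_forall fun w => ?_))
    have h5 : Complex.exp (-(((n : ℝ) + 1)⁻¹ : ℝ) * ‖w‖ ^ 2) =
        (Real.exp (-((n : ℝ) + 1)⁻¹ * ‖w‖ ^ 2) : ℂ) := by simp
    simp only [h5, Complex.re_ofReal_mul]
    rfl
  have hmeasB : MeasurableSet B := measurableSet_ball
  have hfin : volume B ≠ ⊤ := measure_ball_lt_top.ne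
  obtain ⟨-, h1, h2⟩ := integrable_and_integral_le_of_tendsto_ae (μ := volume.restrict Bᶜ)
    (f := fun (n : ℕ) w => -(Real.exp (-((n : ℝ) + 1)⁻¹ * ‖w‖ ^ 2) * r w)) (g := fun w => -r w)
    (a := fun n => volume.real B * (∫ x, F x) -
      ∫ w : V, Real.exp (-((n : ℝ) + 1)⁻¹ * ‖w‖ ^ 2) * r w)
    (fun n => (hint n).neg.integrableOn)
    (fun n => by
      filter_upwards [ae_restrict_mem hmeasB.compl] with w hw
      have : r w ≤ 0 := hF.reFourier_nonpos w (by simpa [hB] using hw)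
      have h2 := Real.exp_pos (-((n : ℝ) + 1)⁻¹ * ‖w‖ ^ 2)
      simp only [Pi.zero_apply]
      nlinarith)
    (Eventually.of_forall fun w => by
      have h1 : Tendsto (fun n : ℕ => -((n : ℝ) + 1)⁻¹ * ‖w‖ ^ 2) atTop (𝓝 0) := by
        simpa using ((tendsto_one_div_add_atTop_nhds_zero_nat (𝕜 := ℝ)).neg.mul_const (‖w‖ ^ 2))
      simpa using (((Real.continuous_exp.tendsto _).comp h1).mul_const (r w)).neg)
    (fun n => by
      have h1 := integral_add_compl hmeasB (hint n)
      have h2 : ∫ w in B, Real.exp (-((n : ℝ) + 1)⁻¹ * ‖w‖ ^ 2) * r w ≤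
          volume.real B * ∫ x, F x := by
        calc _ ≤ ∫ w in B, ∫ x, F x := by
              refine setIntegral_mono (hint n).integrableOn (integrableOn_const hfin) fun w => ?_
              have h3 := hF.abs_reFourier_le w
              have h4 : Real.exp (-((n : ℝ) + 1)⁻¹ * ‖w‖ ^ 2) ≤ 1 :=
                Real.exp_le_one_iff.2 (by
                  rw [neg_mul]; exact neg_nonpos.2 (by positivity))
              calc _ ≤ Real.exp (-((n : ℝ) + 1)⁻¹ * ‖w‖ ^ 2) * |r w| := by
                    gcongr; exact le_abs_self _
                _ ≤ 1 * |r w| := by gcongr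
                _ ≤ _ := by rw [one_mul]; exact h3
          _ = _ := by simp
      rw [integral_neg]
      linarith)
    (hlim.const_sub _)
  exact ⟨by simpa [IntegrableOn] using h1.neg, h2⟩

theorem integrable_reFourier (hF : IsCohnElkies F) : Integrable (reFourier F) := by
  rw [← integrableOn_univ, ← Set.union_compl_self (Metric.ball (0 : V) 1)]
  refine IntegrableOn.union ?_ hF.integrableOn_compl_ball.1
  exact ((continuous_reFourier hF.integrable).continuousOn.integrableOn_compact
    (isCompact_closedBall 0 1)).mono_set Metric.ball_subset_closedBall

theorem setIntegral_ball_abs_le (hF : IsCohnElkies F) :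
    ∫ y in Metric.ball 0 1, |reFourier F y| ≤
      volume.real (Metric.ball (0 : V) 1) * ∫ x, F x := by
  calc _ ≤ ∫ w in Metric.ball (0 : V) 1, ∫ x, F x :=
        setIntegral_mono hF.integrable_reFourier.abs.integrableOn
          (integrableOn_const measure_ball_lt_top.ne) hF.abs_reFourier_le
    _ = _ := by simp

theorem integral_abs_reFourier_le (hF : IsCohnElkies F) :
    ∫ y, |reFourier F y| ≤ 2 * volume.real (Metric.ball (0 : V) 1) * ∫ x, F x := by
  rw [← integral_add_compl (measurableSet_ball (x := (0 : V)) (ε := 1))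
    hF.integrable_reFourier.abs]
  have h1 := hF.setIntegral_ball_abs_le
  have h2 : ∫ y in (Metric.ball (0 : V) 1)ᶜ, |reFourier F y| =
      ∫ y in (Metric.ball 0 1)ᶜ, -reFourier F y := by
    refine setIntegral_congr_fun measurableSet_ball.compl fun y hy => ?_
    exact abs_of_nonpos (hF.reFourier_nonpos y (by simpa using hy))
  have h3 := hF.integrableOn_compl_ball.2
  have h4 := hF.nonneg 0
  linarith

theorem fourier_reFourier (hF : IsCohnElkies F) (heven : ∀ x, F (-x) = F x) :
    𝓕 (fun y => (reFourier F y : ℂ)) = fun x => (F x : ℂ) := by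
  have h0 : 𝓕 (fun x => (F x : ℂ)) = fun y => (reFourier F y : ℂ) :=
    funext (fourier_eq_reFourier heven)
  have h := Continuous.fourierInv_fourier_eq
    (Complex.continuous_ofReal.comp hF.continuous) hF.integrable.ofReal (by
      have h1 : Integrable (fun y => (reFourier F y : ℂ)) := hF.integrable_reFourier.ofReal
      rwa [← h0] at h1)
  ext x
  have h1 := congrFun h (-x)
  rw [Real.fourierInv_eq_fourier_neg, neg_neg] at h1
  simp only [Function.comp_apply, heven] at h1
  rw [← h1, ← h0]
  rfl

theorem apply_le (hF : IsCohnElkies F) (heven : ∀ x, F (-x) = F x) (x : V) :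
    F x ≤ 2 * volume.real (Metric.ball (0 : V) 1) * ∫ x, F x := by
  refine le_trans ?_ hF.integral_abs_reFourier_le
  have h := norm_fourier_le (fun y => (reFourier F y : ℂ)) x
  rw [hF.fourier_reFourier heven] at h
  simpa [abs_of_nonneg (hF.nonneg x)] using h

theorem integral_reFourier (hF : IsCohnElkies F) (heven : ∀ x, F (-x) = F x) :
    ∫ y, reFourier F y = F 0 := by
  have h := congrFun (hF.fourier_reFourier heven) 0
  simp only [Real.fourier_eq, inner_zero_right, neg_zero, AddChar.map_zero_eq_one, one_smul,
    integral_complex_ofReal] at h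
  exact_mod_cast h

end IsCohnElkies

/-- The class contains a function that is positive at the origin. -/
theorem exists_isCohnElkies_pos : ∃ F : V → ℝ, IsCohnElkies F ∧ 0 < F 0 := by
  let φ : ContDiffBump (0 : V) := ⟨1 / 4, 1 / 2, by norm_num, by norm_num⟩
  set ψ : SchwartzMap V ℂ := (φ.hasCompactSupport.comp_left Complex.ofReal_zero).toSchwartzMap
    (Complex.ofRealCLM.contDiff.comp φ.contDiff) with hψ
  have hψφ : (ψ : V → ℂ) = fun x => (φ x : ℂ) := rfl
  have hψi : Integrable (ψ : V → ℂ) := ψ.integrable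
  have hψi' : Integrable (𝓕 (ψ : V → ℂ)) := (𝓕 ψ).integrable
  have hφi : Integrable (φ : V → ℝ) := φ.integrable
  set p := reFourier (φ : V → ℝ) with hp
  have hpψ : 𝓕 (ψ : V → ℂ) = fun y => (p y : ℂ) := by
    rw [hψφ]
    exact funext (fourier_eq_reFourier fun x => φ.neg x)
  have hpi : Integrable p := by
    have := hψi'.re
    rw [hpψ] at this
    simpa using this
  have hpc : Continuous p := continuous_reFourier hφi
  have hFi : Integrable (fun x => p x * p x) :=
    hpi.mul_bdd hpc.aestronglyMeasurable (Eventually.of_forall fun x => abs_reFourier_le _ x)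
  refine ⟨fun x => p x * p x, ⟨hpc.mul hpc, hFi, fun x => mul_self_nonneg _, fun y hy => ?_⟩, ?_⟩
  · set τ : V → ℂ := fun x => ψ (x + -y) with hτ
    have hτi : Integrable τ := hψi.comp_add_right (-y)
    have hτc : Continuous τ := ψ.continuous.comp (continuous_id.add continuous_const)
    have hτF : ∀ x, 𝓕 τ x = 𝐞 (-inner ℝ x y) • 𝓕 (ψ : V → ℂ) x := by
      intro x
      have h := congrFun (VectorFourier.fourierIntegral_comp_add_right Real.fourierChar volume
        (innerₗ V) (ψ : V → ℂ) (-y)) x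
      simp only [innerₗ_apply_apply, inner_neg_left] at h
      rw [real_inner_comm]
      exact h
    have hτFi : Integrable (𝓕 τ) := by
      have h := (Real.fourierIntegral_convergent_iff y).2 hψi'
      exact h.congr (Eventually.of_forall fun x => (hτF x).symm)
    have h1 : 𝓕 (fun x => ((p x * p x : ℝ) : ℂ)) y = ∫ x, ψ x * 𝓕 (𝓕 τ) x := by
      rw [← integral_fourier_mul_eq_integral_mul_fourier hψi hτFi, Real.fourier_eq]
      congr with x
      rw [hτF, hpψ, mul_smul_comm]
      push_cast
      rfl
    have h2 : ∀ x, ψ x * 𝓕 (𝓕 τ) x = 0 := by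
      intro x
      have h3 := congrFun (hτc.fourierInv_fourier_eq hτi hτFi) (-x)
      rw [Real.fourierInv_eq_fourier_neg, neg_neg] at h3
      rw [h3]
      by_contra hne
      have ha : φ x ≠ 0 := fun h => hne (by simp [hψφ, h])
      have hb : φ (-x + -y) ≠ 0 := fun h => hne (by simp [hτ, hψφ, h])
      have ha' : x ∈ Function.support φ := ha
      have hb' : -x + -y ∈ Function.support φ := hb
      rw [φ.support_eq, mem_ball_zero_iff] at ha' hb'
      have h4 : ‖y‖ ≤ ‖x‖ + ‖-x + -y‖ := by
        calc ‖y‖ = ‖-(x + (-x + -y))‖ := by congr 1; abel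
          _ ≤ _ := by rw [norm_neg]; exact norm_add_le _ _
      have h5 : φ.rOut = 1 / 2 := rfl
      rw [h5] at ha' hb'
      linarith
    simp only [reFourier, h1, h2, integral_zero, Complex.zero_re, le_refl]
  · have : 0 < p 0 := by
      rw [hp, reFourier_zero]
      exact φ.integral_pos
    positivity

/-- A function and the real part of its Fourier transform, combined into one complex function. -/
noncomputable def fourierPair (F : V → ℝ) (x : V) : ℂ := F x + reFourier F x * Complex.I

/-- Even functions of the Cohn–Elkies class with total mass one. -/
structure IsNormalizedCohnElkies (F : V → ℝ) : Prop extends IsCohnElkies F where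
  even : ∀ x, F (-x) = F x
  integral_eq_one : ∫ x, F x = 1

theorem IsCohnElkies.exists_isNormalizedCohnElkies {F : V → ℝ} (hF : IsCohnElkies F)
    (h : F ≠ 0) : ∃ H : V → ℝ, IsNormalizedCohnElkies H ∧ H 0 = F 0 / ∫ x, F x := by
  have hpos := hF.integral_pos h
  have hN := hF.comp (LinearIsometryEquiv.neg ℝ)
  refine ⟨fun x => (2 * ∫ x, F x)⁻¹ * (F x + (F ∘ LinearIsometryEquiv.neg ℝ) x),
    ⟨(hF.add hN).const_mul (by positivity), fun x => ?_, ?_⟩, ?_⟩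
  · simp [add_comm]
  · rw [integral_const_mul, integral_add hF.integrable hN.integrable]
    have : ∫ x, (F ∘ LinearIsometryEquiv.neg ℝ) x = ∫ x, F x := by
      simpa using integral_neg_eq_self F volume
    rw [this]
    field_simp
    norm_num
  · simp only [Function.comp_apply, map_zero]
    field_simp
    ring

namespace IsNormalizedCohnElkies

variable {F G : V → ℝ}

theorem midpoint (hF : IsNormalizedCohnElkies F) (hG : IsNormalizedCohnElkies G) :
    IsNormalizedCohnElkies (fun x => (1 / 2 : ℝ) * (F x + G x)) where
  toIsCohnElkies := (hF.add hG.toIsCohnElkies).const_mul (by norm_num)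
  even x := by rw [hF.even, hG.even]
  integral_eq_one := by
    rw [integral_const_mul, integral_add hF.integrable hG.integrable, hF.integral_eq_one,
      hG.integral_eq_one]
    norm_num

theorem comp_isometry (hF : IsNormalizedCohnElkies F) (R : V ≃ₗᵢ[ℝ] V) :
    IsNormalizedCohnElkies (F ∘ R) where
  toIsCohnElkies := hF.toIsCohnElkies.comp R
  even x := by simp [hF.even]
  integral_eq_one := by
    rw [← hF.integral_eq_one]
    exact R.measurePreserving.integral_comp R.toHomeomorph.measurableEmbedding F

theorem norm_fourierPair_sq_le (hF : IsNormalizedCohnElkies F) (x : V) :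
    ‖fourierPair F x‖ ^ 2 ≤
      2 * volume.real (Metric.ball (0 : V) 1) * F x + |reFourier F x| := by
  have h1 := hF.apply_le hF.even x
  have h2 := hF.abs_reFourier_le x
  rw [hF.integral_eq_one] at h1 h2
  have h3 := hF.nonneg x
  have h4 : ‖fourierPair F x‖ ^ 2 = F x * F x + |reFourier F x| * |reFourier F x| := by
    rw [Complex.sq_norm, fourierPair, Complex.normSq_add_mul_I, sq, sq, abs_mul_abs_self]
  rw [h4]
  refine add_le_add (mul_le_mul_of_nonneg_right (by linarith) h3) ?_
  nlinarith [abs_nonneg (reFourier F x)]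

theorem continuous_fourierPair (hF : IsNormalizedCohnElkies F) : Continuous (fourierPair F) :=
  (Complex.continuous_ofReal.comp hF.continuous).add
    ((Complex.continuous_ofReal.comp (continuous_reFourier hF.integrable)).mul continuous_const)

theorem integrable_norm_fourierPair_sq (hF : IsNormalizedCohnElkies F) :
    Integrable (fun x => ‖fourierPair F x‖ ^ 2) := by
  refine ((hF.integrable.const_mul (2 * volume.real (Metric.ball (0 : V) 1))).add
    hF.integrable_reFourier.abs).mono'
    (hF.continuous_fourierPair.norm.pow 2).aestronglyMeasurable
    (Eventually.of_forall fun x => ?_)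
  rw [Real.norm_of_nonneg (by positivity)]
  exact hF.norm_fourierPair_sq_le x

theorem memLp_fourierPair (hF : IsNormalizedCohnElkies F) : MemLp (fourierPair F) 2 :=
  (memLp_two_iff_integrable_sq_norm hF.continuous_fourierPair.aestronglyMeasurable).2
    hF.integrable_norm_fourierPair_sq

theorem integral_norm_fourierPair_sq_le (hF : IsNormalizedCohnElkies F) :
    ∫ x, ‖fourierPair F x‖ ^ 2 ≤ 4 * volume.real (Metric.ball (0 : V) 1) := by
  calc _ ≤ ∫ x, (2 * volume.real (Metric.ball (0 : V) 1) * F x + |reFourier F x|) :=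
        integral_mono hF.integrable_norm_fourierPair_sq
          ((hF.integrable.const_mul _).add hF.integrable_reFourier.abs) hF.norm_fourierPair_sq_le
    _ ≤ _ := by
        rw [integral_add (hF.integrable.const_mul _) hF.integrable_reFourier.abs,
          integral_const_mul, hF.integral_eq_one]
        have := hF.integral_abs_reFourier_le
        rw [hF.integral_eq_one] at this
        linarith

end IsNormalizedCohnElkies

/-- Almost everywhere limits of normalized functions. The limit of the values at the origin is
controlled because the Fourier transforms are nonpositive outside a ball. -/
theorem exists_isCohnElkies_of_tendsto_ae {F : ℕ → V → ℝ} {g h : V → ℝ} {c : ℕ → ℝ} {C : ℝ}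
    (hF : ∀ n, IsNormalizedCohnElkies (F n))
    (hg : ∀ᵐ x, Tendsto (fun n => F n x) atTop (𝓝 (g x)))
    (hh : ∀ᵐ x, Tendsto (fun n => reFourier (F n) x) atTop (𝓝 (h x)))
    (hc : ∀ n, c n ≤ F n 0) (hcC : Tendsto c atTop (𝓝 C)) :
    ∃ G : V → ℝ, IsCohnElkies G ∧ G =ᵐ[volume] g ∧ ∫ x, G x ≤ 1 ∧ C ≤ G 0 := by
  set B : Set V := Metric.ball 0 1 with hB
  have hmB : MeasurableSet B := measurableSet_ball
  have hbd : ∀ n y, |reFourier (F n) y| ≤ 1 := fun n y =>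
    ((hF n).abs_reFourier_le y).trans_eq (hF n).integral_eq_one
  obtain ⟨hg0, hgi, hg1⟩ := integrable_and_integral_le_of_tendsto_ae
    (fun n => (hF n).integrable) (fun n => Eventually.of_forall (hF n).nonneg) hg
    (fun n => (hF n).integral_eq_one.le) tendsto_const_nhds
  have hhm : AEStronglyMeasurable h := aestronglyMeasurable_of_tendsto_ae atTop
    (fun n => (continuous_reFourier (hF n).integrable).aestronglyMeasurable) hh
  have hh1 : ∀ᵐ x, |h x| ≤ 1 := by
    filter_upwards [hh] with x hx
    exact le_of_tendsto' hx.abs fun n => hbd n x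
  have hone : IntegrableOn (fun _ : V => (1 : ℝ)) B := integrableOn_const measure_ball_lt_top.ne
  have hhB : IntegrableOn h B := hone.mono' hhm.restrict (ae_restrict_of_ae hh1)
  have hlimB : Tendsto (fun n => ∫ y in B, reFourier (F n) y) atTop (𝓝 (∫ y in B, h y)) :=
    tendsto_integral_of_dominated_convergence (fun _ => 1)
      (fun n => (continuous_reFourier (hF n).integrable).aestronglyMeasurable) hone
      (fun n => Eventually.of_forall (hbd n)) (ae_restrict_of_ae hh)
  obtain ⟨hh0, hhi, hhle⟩ := integrable_and_integral_le_of_tendsto_ae (μ := volume.restrict Bᶜ)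
    (f := fun n y => -reFourier (F n) y) (g := fun y => -h y)
    (a := fun n => (∫ y in B, reFourier (F n) y) - c n)
    (fun n => (hF n).integrable_reFourier.neg.integrableOn)
    (fun n => by
      filter_upwards [ae_restrict_mem hmB.compl] with y hy
      have := (hF n).reFourier_nonpos y (by simpa [hB] using hy)
      simpa using this)
    (ae_restrict_of_ae (hh.mono fun x hx => hx.neg))
    (fun n => by
      have h1 := integral_add_compl hmB (hF n).integrable_reFourier
      rw [(hF n).integral_reFourier (hF n).even] at h1
      rw [integral_neg]
      have := hc n
      linarith)
    (hlimB.sub hcC)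
  have hhBc : IntegrableOn h Bᶜ := by simpa [IntegrableOn] using hhi.neg
  have hhint : Integrable h := by
    rw [← integrableOn_univ, ← Set.union_compl_self B]
    exact hhB.union hhBc
  have hhC : C ≤ ∫ y, h y := by
    rw [← integral_add_compl hmB hhint]
    rw [integral_neg] at hhle
    linarith
  set M : ℝ := max 1 (2 * volume.real B) with hM
  have hFM : ∀ n x, ‖(F n x : ℂ)‖ ≤ M := fun n x => by
    have h1 := (hF n).apply_le (hF n).even x
    rw [(hF n).integral_eq_one, mul_one] at h1
    rw [Complex.norm_real, Real.norm_of_nonneg ((hF n).nonneg x)]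
    exact h1.trans (le_max_right _ _)
  have hrM : ∀ n x, ‖(reFourier (F n) x : ℂ)‖ ≤ M := fun n x => by
    rw [Complex.norm_real]
    exact (hbd n x).trans (le_max_left _ _)
  have hgC := hg.mono fun x hx => (Complex.continuous_ofReal.tendsto _).comp hx
  have hhC' := hh.mono fun x hx => (Complex.continuous_ofReal.tendsto _).comp hx
  have hgh : 𝓕 (fun x => (g x : ℂ)) =ᵐ[volume] fun y => (h y : ℂ) :=
    fourier_ae_eq_of_tendsto (fun n => (hF n).integrable.ofReal)
      (fun n => funext (fourier_eq_reFourier (hF n).even)) hgi.ofReal hhint.ofReal hFM hrM hgC hhC'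
  have hhg : 𝓕 (fun y => (h y : ℂ)) =ᵐ[volume] fun x => (g x : ℂ) :=
    fourier_ae_eq_of_tendsto (fun n => (hF n).integrable_reFourier.ofReal)
      (fun n => (hF n).fourier_reFourier (hF n).even) hhint.ofReal hgi.ofReal hrM hFM hhC' hgC
  have hGg : reFourier h =ᵐ[volume] g := hhg.mono fun x hx => by simp [reFourier, hx]
  have hGi : Integrable (reFourier h) := hgi.congr hGg.symm
  refine ⟨reFourier h, ⟨continuous_reFourier hhint, hGi, fun x => ?_, fun y hy => ?_⟩, hGg, ?_, ?_⟩
  · refine subset_of_ae_imp_mem (μ := volume) isOpen_univ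
      (isClosed_le continuous_const (continuous_reFourier hhint)) ?_
      (subset_closure (Set.mem_univ x))
    filter_upwards [hGg, hg0] with x h1 h2 _
    simpa [h1] using h2
  · have hcont := continuous_reFourier hGi
    refine subset_of_ae_imp_mem (μ := volume) (U := {y : V | 1 < ‖y‖})
      (K := {y | reFourier (reFourier h) y ≤ 0}) (isOpen_lt continuous_const continuous_norm)
      (isClosed_le hcont continuous_const) ?_ ?_
    · filter_upwards [hgh, (ae_restrict_iff' hmB.compl).1 hh0] with y h1 h2 h3
      have h4 : 𝓕 (fun x => (reFourier h x : ℂ)) y = 𝓕 (fun x => (g x : ℂ)) y :=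
        Real.fourier_congr_ae (hGg.mono fun x hx => by simp [hx]) y
      have h5 := h2 (by simpa [hB] using le_of_lt h3)
      rw [reFourier, h4, h1, Complex.ofReal_re]
      simpa using h5
    · have h1 : Tendsto (fun n : ℕ => (1 + 1 / ((n : ℝ) + 1)) • y) atTop (𝓝 y) := by
        simpa using ((tendsto_one_div_add_atTop_nhds_zero_nat (𝕜 := ℝ)).const_add 1).smul_const y
      refine mem_closure_of_tendsto h1 (Eventually.of_forall fun n => ?_)
      have h2 : 0 < 1 / ((n : ℝ) + 1) := by positivity
      rw [Set.mem_ofPred_eq, norm_smul, Real.norm_of_nonneg (by positivity)]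
      nlinarith
  · rw [integral_congr_ae hGg]
    exact hg1
  · rw [reFourier_zero]
    exact hhC

/-- Approximate maximizers produce a radial maximizer. -/
theorem exists_radial_isCohnElkies {C : ℝ}
    (hC : ∀ n : ℕ, ∃ F : V → ℝ, IsNormalizedCohnElkies F ∧ C - 1 / ((n : ℝ) + 1) ≤ F 0) :
    ∃ G : V → ℝ, IsCohnElkies G ∧ (∀ x y, ‖x‖ = ‖y‖ → G x = G y) ∧ ∫ x, G x ≤ 1 ∧ C ≤ G 0 := by
  let S : ℕ → Set (Lp (α := V) ℂ 2) := fun n =>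
    {e | ∃ F : V → ℝ, IsNormalizedCohnElkies F ∧ C - 1 / ((n : ℝ) + 1) ≤ F 0 ∧
      e =ᵐ[volume] fourierPair F}
  obtain ⟨e, u, hu, hlim, hfix⟩ := exists_tendsto_of_antitone_midpoint S
    (by
      rintro n k hnk e ⟨F, hF, hF0, he⟩
      refine ⟨F, hF, le_trans ?_ hF0, he⟩
      gcongr)
    (fun n => by
      obtain ⟨F, hF, hF0⟩ := hC n
      exact ⟨hF.memLp_fourierPair.toLp, F, hF, hF0, hF.memLp_fourierPair.coeFn_toLp⟩)
    (by
      rintro n a ⟨F, hF, hF0, ha⟩ b ⟨G, hG, hG0, hb⟩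
      refine ⟨_, hF.midpoint hG, by linarith, ?_⟩
      filter_upwards [ha, hb, Lp.coeFn_smul (1 / 2 : ℂ) (a + b), Lp.coeFn_add a b]
        with x h1 h2 h3 h4
      rw [h3, Pi.smul_apply, h4, Pi.add_apply, h1, h2, fourierPair, fourierPair, fourierPair,
        reFourier_const_mul, reFourier_add hF.integrable hG.integrable]
      push_cast
      rw [smul_eq_mul]
      ring)
    (4 * volume.real (Metric.ball (0 : V) 1))
    (by
      rintro e ⟨F, hF, -, he⟩
      refine le_trans (le_of_eq ?_) hF.integral_norm_fourierPair_sq_le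
      have h1 : ∀ x, (inner ℂ (e x) (e x) : ℂ) = ((‖e x‖ ^ 2 : ℝ) : ℂ) := fun x => by
        rw [inner_self_eq_norm_sq_to_K]; simp
      rw [← inner_self_eq_norm_sq (𝕜 := ℂ) e, L2.inner_def]
      simp_rw [h1]
      rw [integral_complex_ofReal, RCLike.re_to_complex, Complex.ofReal_re]
      exact integral_congr_ae (he.mono fun x hx => by simp only [hx]))
  choose F hF hF0 huF using hu
  obtain ⟨ns, hns, hae⟩ := (tendstoInMeasure_of_tendsto_Lp hlim).exists_seq_tendsto_ae
  have hae' : ∀ᵐ x, Tendsto (fun n => fourierPair (F (ns n)) x) atTop (𝓝 (e x)) := by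
    filter_upwards [hae, ae_all_iff.2 huF] with x hx h2
    simpa only [h2] using hx
  obtain ⟨G, hG, hGe, hG1, hGC⟩ := exists_isCohnElkies_of_tendsto_ae (fun n => hF (ns n))
    (g := fun x => (e x).re) (h := fun x => (e x).im)
    (hae'.mono fun x hx => by
      simpa [fourierPair, Function.comp_def] using (Complex.continuous_re.tendsto _).comp hx)
    (hae'.mono fun x hx => by
      simpa [fourierPair, Function.comp_def] using (Complex.continuous_im.tendsto _).comp hx)
    (fun n => hF0 (ns n))
    (by
      have := (tendsto_one_div_add_atTop_nhds_zero_nat (𝕜 := ℝ)).const_sub C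
      rw [sub_zero] at this
      exact this.comp hns.tendsto_atTop)
  refine ⟨G, hG, fun x y hxy => ?_, hG1, hGC⟩
  set R : V ≃ₗᵢ[ℝ] V := (ℝ ∙ (x - y))ᗮ.reflection with hR
  have hRx : R x = y := Submodule.reflection_sub hxy
  have hRe := hfix (Lp.compMeasurePreserving R R.measurePreserving)
    (Lp.isometry_compMeasurePreserving _).continuous
    (fun e => Lp.norm_compMeasurePreserving e _)
    (by
      rintro n e ⟨F, hF, hF0, he⟩
      refine ⟨F ∘ R, hF.comp_isometry R, by simpa using hF0, ?_⟩
      filter_upwards [Lp.coeFn_compMeasurePreserving e R.measurePreserving,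
        R.measurePreserving.quasiMeasurePreserving.ae he] with x h1 h2
      rw [h1, Function.comp_apply, h2]
      simp [fourierPair, reFourier_comp])
  have hGR : G ∘ R =ᵐ[volume] G := by
    filter_upwards [hGe, R.measurePreserving.quasiMeasurePreserving.ae hGe,
      Lp.coeFn_compMeasurePreserving e R.measurePreserving] with x h1 h2 h3
    rw [hRe] at h3
    rw [Function.comp_apply, h2, h1, h3, Function.comp_apply]
  have := (hG.continuous.comp R.continuous).ae_eq_iff_eq volume hG.continuous |>.1 hGR
  rw [← hRx]
  exact (congrFun this x).symm

/-- The supremum in the Cohn–Elkies problem is attained by a radial function. -/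
theorem exists_radial_extremizer_of_finiteDimensional :
    ∃ G : V → ℝ, IsCohnElkies G ∧ G ≠ 0 ∧ (∀ x y, ‖x‖ = ‖y‖ → G x = G y) ∧
      G 0 / ∫ x, G x =
        sSup {r : ℝ | ∃ F : V → ℝ, IsCohnElkies F ∧ F ≠ 0 ∧ r = F 0 / ∫ x, F x} := by
  set T : Set ℝ := {r : ℝ | ∃ F : V → ℝ, IsCohnElkies F ∧ F ≠ 0 ∧ r = F 0 / ∫ x, F x} with hT
  obtain ⟨F₀, hF₀, hF₀pos⟩ := exists_isCohnElkies_pos (V := V)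
  have hF₀ne : F₀ ≠ 0 := fun h => by simp [h] at hF₀pos
  have hmem : F₀ 0 / ∫ x, F₀ x ∈ T := ⟨F₀, hF₀, hF₀ne, rfl⟩
  have hbdd : BddAbove T := by
    refine ⟨2 * volume.real (Metric.ball (0 : V) 1), ?_⟩
    rintro _ ⟨F, hF, hne, rfl⟩
    obtain ⟨H, hH, hH0⟩ := hF.exists_isNormalizedCohnElkies hne
    rw [← hH0]
    have := hH.apply_le hH.even 0
    rwa [hH.integral_eq_one, mul_one] at this
  have hpos : 0 < sSup T :=
    (div_pos hF₀pos (hF₀.integral_pos hF₀ne)).trans_le (le_csSup hbdd hmem)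
  obtain ⟨G, hG, hrad, hG1, hGC⟩ := exists_radial_isCohnElkies (V := V) (C := sSup T) (fun n => by
    obtain ⟨_, ⟨F, hF, hne, rfl⟩, hlt⟩ := exists_lt_of_lt_csSup ⟨_, hmem⟩
      (sub_lt_self (sSup T) (by positivity : 0 < 1 / ((n : ℝ) + 1)))
    obtain ⟨H, hH, hH0⟩ := hF.exists_isNormalizedCohnElkies hne
    exact ⟨H, hH, hH0 ▸ hlt.le⟩)
  have hGne : G ≠ 0 := fun h => by
    simp only [h, Pi.zero_apply] at hGC
    linarith
  refine ⟨G, hG, hGne, hrad, le_antisymm (le_csSup hbdd ⟨G, hG, hGne, rfl⟩) ?_⟩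
  rw [le_div_iff₀ (hG.integral_pos hGne)]
  nlinarith

end Fourier

/-- Existence of a radial extremizer for the Cohn–Elkies problem in dimension d. -/
theorem exists_radial_extremizer_CohnElkies (d : ℕ) (hd : 1 ≤ d) :
    ∃ G : EuclideanSpace ℝ (Fin d) → ℝ,
      Continuous G ∧ Integrable G ∧ G ≠ 0 ∧ (∀ x, 0 ≤ G x) ∧
      (∀ y : EuclideanSpace ℝ (Fin d), 1 ≤ ‖y‖ → (𝓕 (fun x => (G x : ℂ)) y).re ≤ 0) ∧
      (∀ x y : EuclideanSpace ℝ (Fin d), ‖x‖ = ‖y‖ → G x = G y) ∧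
      G 0 / (𝓕 (fun x => (G x : ℂ)) 0).re =
        sSup { r : ℝ | ∃ F : EuclideanSpace ℝ (Fin d) → ℝ,
          Continuous F ∧ Integrable F ∧ F ≠ 0 ∧ (∀ x, 0 ≤ F x) ∧
          (∀ y : EuclideanSpace ℝ (Fin d), 1 ≤ ‖y‖ → (𝓕 (fun x => (F x : ℂ)) y).re ≤ 0) ∧
          r = F 0 / (𝓕 (fun x => (F x : ℂ)) 0).re } := by
  have key : ∀ F : EuclideanSpace ℝ (Fin d) → ℝ,
      (Continuous F ∧ Integrable F ∧ (∀ x, 0 ≤ F x) ∧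
        ∀ y, 1 ≤ ‖y‖ → (𝓕 (fun x => (F x : ℂ)) y).re ≤ 0) ↔ IsCohnElkies F :=
    fun F => ⟨fun h => ⟨h.1, h.2.1, h.2.2.1, h.2.2.2⟩,
      fun h => ⟨h.continuous, h.integrable, h.nonneg, h.reFourier_nonpos⟩⟩
  have hzero : ∀ F : EuclideanSpace ℝ (Fin d) → ℝ,
      (𝓕 (fun x => (F x : ℂ)) 0).re = ∫ x, F x := fun F => reFourier_zero
  obtain ⟨G, hG, hne, hrad, hsup⟩ :=
    exists_radial_extremizer_of_finiteDimensional (V := EuclideanSpace ℝ (Fin d))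
  refine ⟨G, hG.continuous, hG.integrable, hne, hG.nonneg, hG.reFourier_nonpos, hrad, ?_⟩
  rw [hzero, hsup]
  congr 1
  ext r
  refine exists_congr fun F => ?_
  rw [hzero, ← key]
  tauto
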